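/- For every d ∈ ℕ there exist constants c₁(d), c₂(d) > 0 such that for every n = (n_1, …, n_d) ∈ ℕ^d and every m ≤ c₁(d) (n_1⋯n_d)/max_j{n_j}, one has Θ_m(T(n)_∞, L_1[−π,π]^d) ≥ c₂(d). -/

import Mathlib

open MeasureTheory

/-- The finite box `∏_j [-n_j, n_j]` of integer frequency vectors. -/
noncomputable def trigBox (d : ℕ) (n : Fin d → ℕ) : Finset (Fin d → ℤ) :=
  Finset.Icc (fun j => -(n j : ℤ)) (fun j => (n j : ℤ))

/-- `T(n)_∞`: real trigonometric polynomials with spectrum in `∏_j [-n_j, n_j]` and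
sup-norm at most `1` on `[-π,π]^d`. -/
def TrigClass (d : ℕ) (n : Fin d → ℕ) : Set ((Fin d → ℝ) → ℝ) :=
  {t | (∃ c : (Fin d → ℤ) → ℂ, (∀ k, c (-k) = starRingEnd ℂ (c k)) ∧
        ∀ x : Fin d → ℝ, (t x : ℂ) =
          ∑ k ∈ trigBox d n, c k * Complex.exp (Complex.I * ∑ j, (k j : ℂ) * (x j : ℂ))) ∧
      ∀ x : Fin d → ℝ, (∀ j, x j ∈ Set.Icc (-Real.pi) Real.pi) → |t x| ≤ 1}

/-- The error of best `m`-term approximation of `f` by sums of tensor products, in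
`L₁(μ)`. -/
noncomputable def theta1 (d m : ℕ) (μ : Measure (Fin d → ℝ)) (f : (Fin d → ℝ) → ℝ) :
    ℝ :=
  sInf {r : ℝ | ∃ u : Fin m → Fin d → ℝ → ℝ,
    (∀ s i, Measurable (u s i)) ∧
    Integrable (fun x : Fin d → ℝ => ∑ s, ∏ i, u s i (x i)) μ ∧
    r = ∫ x, |f x - ∑ s, ∏ i, u s i (x i)| ∂μ}

/-!
Sample a sum of `m` tensor products on a translate of a grid with `n_j + 1` points on the `j`-th
axis. The `∏ (n_j + 1)` values are polynomials of degree at most `d` in the `m ∑ (n_j + 1)` values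
of the univariate factors, so if `m` is small compared with `∏ n_j / max n_j` they have few
parameters. A family of polynomials with few parameters cannot approximate all sign patterns, even
after discarding a small proportion of the coordinates: after fixing the discarded set and choosing
parameters for each pattern, the matrix of the values of the products `∏ (1 + ε_k P_k) / 2` at these
parameters has a large trace, a small Frobenius norm and a small rank, and
`(tr M)² ≤ rank M * ‖M‖²`.

Hence some sign pattern `ε` is badly approximated at a fixed proportion of the grid points, on
every translate of the grid. Interpolating `ε` by translates of the Fejér kernel gives `t ∈ T(n)_∞`
which stays close to `ε` on the translates of the grid by vectors in a small box. Integrating over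
this box bounds the `L₁` distance of `t` from the sum of tensor products.
-/

section

open Finset

lemma sq_trace_le_rank_mul_sum_sq {α : Type*} [Fintype α] (M : Matrix α α ℝ) :
    M.trace ^ 2 ≤ M.rank * ∑ i, ∑ j, M i j ^ 2 := by
  classical
  let e := WithLp.linearEquiv 2 ℝ (α → ℝ)
  let U := (LinearMap.range M.mulVecLin).map (e.symm : (α → ℝ) →ₗ[ℝ] EuclideanSpace ℝ α)
  have hU : Module.finrank ℝ U = M.rank := e.symm.finrank_map_eq _
  let b := stdOrthonormalBasis ℝ U
  let col : α → U := fun j =>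
    ⟨WithLp.toLp 2 (M.col j), Submodule.mem_map_of_mem ⟨Pi.single j 1, by simp⟩⟩
  have col_eq (j : α) : M j j = ∑ i, inner ℝ (b i) (col j) * (b i : EuclideanSpace ℝ α) j := by
    have h := congrArg (fun v : U => (v : EuclideanSpace ℝ α) j) (b.sum_repr' (col j))
    simpa [col] using h.symm
  have norm_col (j : α) : ∑ i, inner ℝ (b i) (col j) ^ 2 = ∑ i, M i j ^ 2 := by
    have h := b.sum_sq_inner_right (col j)
    rw [h]
    simp [col, EuclideanSpace.norm_sq_eq]
  have norm_basis (i) : ∑ j, (b i : EuclideanSpace ℝ α) j ^ 2 = 1 := by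
    have h : ‖(b i : EuclideanSpace ℝ α)‖ ^ 2 = 1 := by
      rw [Submodule.norm_coe, b.norm_eq_one, one_pow]
    simpa [EuclideanSpace.norm_sq_eq] using h
  calc M.trace ^ 2
      = (∑ q : α × Fin (Module.finrank ℝ U),
          inner ℝ (b q.2) (col q.1) * (b q.2 : EuclideanSpace ℝ α) q.1) ^ 2 := by
        rw [Fintype.sum_prod_type]
        simp only [Matrix.trace, Matrix.diag_apply, col_eq]
    _ ≤ (∑ q : α × Fin (Module.finrank ℝ U), inner ℝ (b q.2) (col q.1) ^ 2) *
          ∑ q : α × Fin (Module.finrank ℝ U), (b q.2 : EuclideanSpace ℝ α) q.1 ^ 2 :=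
        sum_mul_sq_le_sq_mul_sq _ _ _
    _ = M.rank * ∑ i, ∑ j, M i j ^ 2 := by
        rw [Fintype.sum_prod_type, Fintype.sum_prod_type_right,
          sum_comm (f := fun i j => M i j ^ 2)]
        simp only [norm_col, norm_basis, sum_const, card_univ, Fintype.card_fin, hU, nsmul_eq_mul,
          mul_one, mul_comm]

/-- The exponent vectors of the monomials of total degree at most `D` in variables indexed by `τ`.
-/
def exponentsLE (τ : Type*) [Fintype τ] [DecidableEq τ] (D : ℕ) : Finset (τ → ℕ) :=
  {a ∈ Fintype.piFinset fun _ => range (D + 1) | ∑ i, a i ≤ D}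

lemma mem_exponentsLE {τ : Type*} [Fintype τ] [DecidableEq τ] {D : ℕ} {a : τ → ℕ} :
    a ∈ exponentsLE τ D ↔ ∑ i, a i ≤ D := by
  simp only [exponentsLE, mem_filter, Fintype.mem_piFinset, mem_range, Nat.lt_succ_iff,
    and_iff_right_iff_imp]
  exact fun h i => (single_le_sum (fun _ _ => Nat.zero_le _) (mem_univ i)).trans h

lemma card_exponentsLE_mul_pow_le (τ : Type*) [Fintype τ] [DecidableEq τ] (D : ℕ) {x : ℝ}
    (hx₀ : 0 ≤ x) (hx₁ : x < 1) :
    #(exponentsLE τ D) * x ^ D ≤ (1 - x)⁻¹ ^ Fintype.card τ := by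
  calc #(exponentsLE τ D) * x ^ D = ∑ _a ∈ exponentsLE τ D, x ^ D := by simp
    _ ≤ ∑ a ∈ exponentsLE τ D, ∏ i, x ^ a i := by
        refine sum_le_sum fun a ha => ?_
        rw [prod_pow_eq_pow_sum]
        exact pow_le_pow_of_le_one hx₀ hx₁.le (mem_exponentsLE.mp ha)
    _ ≤ ∑ a ∈ Fintype.piFinset fun _ : τ => range (D + 1), ∏ i, x ^ a i :=
        sum_le_sum_of_subset_of_nonneg (filter_subset _ _) fun _ _ _ => by positivity
    _ = ∏ _i : τ, ∑ j ∈ range (D + 1), x ^ j := (prod_univ_sum _ _).symm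
    _ ≤ ∏ _i : τ, (1 - x)⁻¹ :=
        prod_le_prod (fun _ _ => by positivity) fun _ _ => by
          rw [← tsum_geometric_of_lt_one hx₀ hx₁]
          exact (summable_geometric_of_lt_one hx₀ hx₁).sum_le_tsum _ fun _ _ => by positivity
    _ = (1 - x)⁻¹ ^ Fintype.card τ := by simp

lemma rank_eval_le_card_exponentsLE {α τ K : Type*} [Fintype α] [Fintype τ] [DecidableEq τ]
    [Field K] {D : ℕ} {f : α → MvPolynomial τ K} (hf : ∀ b, (f b).totalDegree ≤ D)
    (z : α → τ → K) :
    (Matrix.of fun a b => MvPolynomial.eval (z a) (f b)).rank ≤ #(exponentsLE τ D) := by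
  classical
  let monomials : Matrix α (exponentsLE τ D) K := Matrix.of fun a v => ∏ i, z a i ^ v.1 i
  let coeffs : Matrix (exponentsLE τ D) α K :=
    Matrix.of fun v b => (f b).coeff (Finsupp.equivFunOnFinite.symm v.1)
  have factor : (Matrix.of fun a b => MvPolynomial.eval (z a) (f b)) = monomials * coeffs := by
    ext a b
    simp only [Matrix.of_apply, Matrix.mul_apply, monomials, coeffs]
    rw [sum_coe_sort (exponentsLE τ D)
      fun v => (∏ i, z a i ^ v i) * (f b).coeff (Finsupp.equivFunOnFinite.symm v),
      MvPolynomial.eval_eq']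
    refine sum_of_injOn (fun v : τ →₀ ℕ => (v : τ → ℕ)) DFunLike.coe_injective.injOn ?_ ?_ ?_
    · intro v hv
      have := (MvPolynomial.le_totalDegree hv).trans (hf b)
      rw [Finsupp.sum_fintype _ _ fun _ => rfl] at this
      exact mem_coe.mpr (mem_exponentsLE.mpr this)
    · intro v _ hv
      rw [MvPolynomial.notMem_support_iff.mp fun h => hv ⟨_, h, rfl⟩, mul_zero]
    · intro v _
      simp [mul_comm]
  rw [factor]
  calc (monomials * coeffs).rank ≤ monomials.rank := Matrix.rank_mul_le_left _ _
    _ ≤ Fintype.card (exponentsLE τ D) := monomials.rank_le_card_width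
    _ = #(exponentsLE τ D) := Fintype.card_coe _

lemma sum_pow_card_mul_pow_le (ι : Type*) [Fintype ι] (q : ℕ) {a y : ℝ}
    (ha : 0 ≤ a) (hy₀ : 0 ≤ y) (hy₁ : y ≤ 1) :
    (∑ B : Finset ι with q * #B ≤ Fintype.card ι, a ^ #B) * y ^ Fintype.card ι ≤
      (1 + a * y ^ q) ^ Fintype.card ι := by
  calc (∑ B : Finset ι with q * #B ≤ Fintype.card ι, a ^ #B) * y ^ Fintype.card ι
      = ∑ B : Finset ι with q * #B ≤ Fintype.card ι, a ^ #B * y ^ Fintype.card ι := sum_mul ..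
    _ ≤ ∑ B : Finset ι with q * #B ≤ Fintype.card ι, (a * y ^ q) ^ #B := by
        refine sum_le_sum fun B hB => ?_
        rw [mul_pow, ← pow_mul]
        exact mul_le_mul_of_nonneg_left
          (pow_le_pow_of_le_one hy₀ hy₁ (mem_filter.mp hB).2) (by positivity)
    _ ≤ ∑ B : Finset ι, (a * y ^ q) ^ #B :=
        sum_le_sum_of_subset_of_nonneg (filter_subset _ _) fun _ _ _ => by positivity
    _ = (1 + a * y ^ q) ^ Fintype.card ι := by
        simpa [add_comm] using Fintype.sum_pow_mul_eq_add_pow ι (a * y ^ q) 1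

lemma sum_two_pow_card_le (ι : Type*) [Fintype ι] :
    ∑ B : Finset ι with 40 * #B ≤ Fintype.card ι, (2 : ℝ) ^ #B ≤ (23 / 20) ^ Fintype.card ι := by
  refine le_of_mul_le_mul_right ((sum_pow_card_mul_pow_le ι 40 (y := 10 / 11) zero_le_two
    (by norm_num) (by norm_num)).trans ?_) (by positivity : (0 : ℝ) < (10 / 11) ^ Fintype.card ι)
  rw [← mul_pow]
  gcongr
  norm_num

section SignPatterns

variable {ι τ : Type*} [Fintype ι]

section

variable [DecidableEq ι]

/-- The polynomial `∏ (1 + ε_k P_k) / 2` over the coordinates `k ∉ B`. It tests for the pattern `ε`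
off `B`: at a point where `P_k = ε'_k` for all `k ∉ B`, its value is `1` if `ε'` agrees with `ε`
off `B`, and `0` otherwise. -/
noncomputable def signTest (P : ι → MvPolynomial τ ℝ) (B : Finset ι) (ε : ι → ℤˣ) :
    MvPolynomial τ ℝ :=
  ∏ k ∈ Bᶜ, (MvPolynomial.C (1 / 2) + MvPolynomial.C ((ε k : ℝ) / 2) * P k)

lemma eval_signTest (P : ι → MvPolynomial τ ℝ) (B : Finset ι) (ε : ι → ℤˣ) (z : τ → ℝ) :
    MvPolynomial.eval z (signTest P B ε) =
      ∏ k ∈ Bᶜ, (1 + ε k * MvPolynomial.eval z (P k)) / 2 := by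
  simp only [signTest, map_prod, map_add, map_mul, MvPolynomial.eval_C]
  exact prod_congr rfl fun k _ => by ring

lemma totalDegree_signTest_le {P : ι → MvPolynomial τ ℝ} {D : ℕ}
    (hP : ∀ k, (P k).totalDegree ≤ D) (B : Finset ι) (ε : ι → ℤˣ) :
    (signTest P B ε).totalDegree ≤ D * Fintype.card ι := by
  have factor_le (k : ι) :
      (MvPolynomial.C (1 / 2) + MvPolynomial.C ((ε k : ℝ) / 2) * P k).totalDegree ≤ D := by
    refine (MvPolynomial.totalDegree_add _ _).trans (max_le (by simp) ?_)
    exact (MvPolynomial.totalDegree_mul _ _).trans (by simpa using hP k)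
  calc (signTest P B ε).totalDegree
      ≤ ∑ k ∈ Bᶜ, (MvPolynomial.C (1 / 2) + MvPolynomial.C ((ε k : ℝ) / 2) * P k).totalDegree :=
        by rw [signTest]; exact MvPolynomial.totalDegree_finsetProd _ _
    _ ≤ #Bᶜ • D := sum_le_card_nsmul _ _ _ fun k _ => factor_le k
    _ ≤ D * Fintype.card ι := by
        rw [smul_eq_mul, mul_comm]
        exact Nat.mul_le_mul_left D (card_le_univ _)

lemma pow_le_prod_of_abs_sub_le {δ : ℝ} (hδ₀ : 0 ≤ δ) (hδ₂ : δ ≤ 2) {B : Finset ι} {ε : ι → ℤˣ}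
    {v : ι → ℝ} (hv : ∀ k ∉ B, |v k - ε k| ≤ δ) :
    (1 - δ / 2) ^ Fintype.card ι ≤ ∏ k ∈ Bᶜ, (1 + ε k * v k) / 2 := by
  calc (1 - δ / 2) ^ Fintype.card ι ≤ (1 - δ / 2) ^ #Bᶜ :=
        pow_le_pow_of_le_one (by linarith) (by linarith) (card_le_univ _)
    _ = ∏ _k ∈ Bᶜ, (1 - δ / 2) := (prod_const _).symm
    _ ≤ ∏ k ∈ Bᶜ, (1 + ε k * v k) / 2 := by
        refine prod_le_prod (fun _ _ => by linarith) fun k hk => ?_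
        have := abs_le.mp (hv k (mem_compl.mp hk))
        rcases Int.units_eq_one_or (ε k) with h | h <;>
          simp only [h, Units.val_one, Units.val_neg, Int.cast_one, Int.cast_neg] at this ⊢ <;>
          linarith

lemma sum_signs_prod_sq (B : Finset ι) (v : ι → ℝ) :
    ∑ ε : ι → ℤˣ, (∏ k ∈ Bᶜ, (1 + ε k * v k) / 2) ^ 2 =
      2 ^ #B * ∏ k ∈ Bᶜ, (1 + v k ^ 2) / 2 := by
  let factor (k : ι) (u : ℤˣ) : ℝ := if k ∈ Bᶜ then ((1 + u * v k) / 2) ^ 2 else 1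
  have sum_factor_of_mem {k : ι} (hk : k ∈ B) : ∑ u, factor k u = 2 := by simp [factor, hk]
  have sum_factor_of_mem_compl {k : ι} (hk : k ∈ Bᶜ) :
      ∑ u, factor k u = (1 + v k ^ 2) / 2 := by
    rw [UnitsInt.univ, sum_pair (by decide)]
    simp only [factor, if_pos hk, Units.val_one, Units.val_neg, Int.cast_one, Int.cast_neg]
    ring
  calc ∑ ε : ι → ℤˣ, (∏ k ∈ Bᶜ, (1 + ε k * v k) / 2) ^ 2
      = ∑ ε : ι → ℤˣ, ∏ k, factor k (ε k) := by
        simp only [← prod_pow, factor, Fintype.prod_ite_mem]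
    _ = ∏ k, ∑ u, factor k u := by rw [prod_univ_sum, Fintype.piFinset_univ]
    _ = (∏ k ∈ B, ∑ u, factor k u) * ∏ k ∈ Bᶜ, ∑ u, factor k u :=
        (prod_mul_prod_compl B _).symm
    _ = 2 ^ #B * ∏ k ∈ Bᶜ, (1 + v k ^ 2) / 2 := by
        rw [prod_congr rfl fun k hk => sum_factor_of_mem hk, prod_const,
          prod_congr rfl fun k hk => sum_factor_of_mem_compl hk]

lemma sum_signs_prod_sq_le {δ : ℝ} (hδ : 0 ≤ δ) {B : Finset ι} {ε₀ : ι → ℤˣ}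
    {v : ι → ℝ} (hv : ∀ k ∉ B, |v k - ε₀ k| ≤ δ) :
    ∑ ε : ι → ℤˣ, (∏ k ∈ Bᶜ, (1 + ε k * v k) / 2) ^ 2 ≤
      2 ^ #B * ((1 + (1 + δ) ^ 2) / 2) ^ Fintype.card ι := by
  have abs_le (k : ι) (hk : k ∈ Bᶜ) : |v k| ≤ 1 + δ := by
    calc |v k| = |ε₀ k + (v k - ε₀ k)| := by rw [add_sub_cancel]
      _ ≤ |(ε₀ k : ℝ)| + |v k - ε₀ k| := abs_add_le _ _
      _ ≤ 1 + δ := add_le_add (abs_unit_intCast _).le (hv k (mem_compl.mp hk))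
  rw [sum_signs_prod_sq]
  refine mul_le_mul_of_nonneg_left ?_ (by positivity)
  calc ∏ k ∈ Bᶜ, (1 + v k ^ 2) / 2 ≤ ∏ _k ∈ Bᶜ, (1 + (1 + δ) ^ 2) / 2 := by
        refine prod_le_prod (fun _ _ => by positivity) fun k hk => ?_
        rw [← sq_abs]
        gcongr
        exact abs_le k hk
    _ = ((1 + (1 + δ) ^ 2) / 2) ^ #Bᶜ := prod_const _
    _ ≤ ((1 + (1 + δ) ^ 2) / 2) ^ Fintype.card ι :=
        pow_le_pow_right₀ (by nlinarith) (card_le_univ _)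

end

lemma card_approximable_signs_le [Fintype τ] [DecidableEq τ] {P : ι → MvPolynomial τ ℝ} {D : ℕ}
    (hP : ∀ k, (P k).totalDegree ≤ D) {δ : ℝ} (hδ₀ : 0 ≤ δ) (hδ₂ : δ ≤ 2)
    {G : Finset (ι → ℤˣ)} {B : Finset ι} {z : (ι → ℤˣ) → τ → ℝ}
    (hz : ∀ ε ∈ G, ∀ k ∉ B, |MvPolynomial.eval (z ε) (P k) - ε k| ≤ δ) :
    #G * ((1 - δ / 2) ^ 2) ^ Fintype.card ι ≤
      #(exponentsLE τ (D * Fintype.card ι)) *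
        (2 ^ #B * ((1 + (1 + δ) ^ 2) / 2) ^ Fintype.card ι) := by
  classical
  set N := Fintype.card ι
  set W := #(exponentsLE τ (D * N))
  set F : ℝ := 2 ^ #B * ((1 + (1 + δ) ^ 2) / 2) ^ N
  rcases G.eq_empty_or_nonempty with rfl | hG
  · rw [card_empty, Nat.cast_zero, zero_mul]
    positivity
  let M : Matrix G G ℝ := .of fun ε ε' => MvPolynomial.eval (z ε.1) (signTest P B ε'.1)
  have diag_ge (ε : G) : (1 - δ / 2) ^ N ≤ M ε ε := by
    simpa only [M, Matrix.of_apply, eval_signTest] using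
      pow_le_prod_of_abs_sub_le hδ₀ hδ₂ (hz ε.1 ε.2)
  have row_le (ε : G) : ∑ ε', M ε ε' ^ 2 ≤ F := by
    simp only [M, Matrix.of_apply, eval_signTest]
    rw [sum_coe_sort G fun ε' =>
      (∏ k ∈ Bᶜ, (1 + (ε' k : ℝ) * MvPolynomial.eval (z ε) (P k)) / 2) ^ 2]
    exact (sum_le_sum_of_subset_of_nonneg (subset_univ _) fun _ _ _ => sq_nonneg _).trans
      (sum_signs_prod_sq_le hδ₀ (hz ε.1 ε.2))
  have rank_le : M.rank ≤ W :=
    rank_eval_le_card_exponentsLE (fun ε' : G => totalDegree_signTest_le hP B ε'.1) _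
  have trace_ge : #G * (1 - δ / 2) ^ N ≤ M.trace := by
    calc #G * (1 - δ / 2) ^ N = ∑ _ε : G, (1 - δ / 2) ^ N := by simp
      _ ≤ M.trace := sum_le_sum fun ε _ => diag_ge ε
  have frobenius_le : ∑ ε, ∑ ε', M ε ε' ^ 2 ≤ #G * F := by
    calc ∑ ε, ∑ ε', M ε ε' ^ 2 ≤ ∑ _ε : G, F := sum_le_sum fun ε _ => row_le ε
      _ = #G * F := by simp
  have h : #G * (#G * ((1 - δ / 2) ^ 2) ^ N) ≤ #G * (W * F) := by
    calc (#G : ℝ) * (#G * ((1 - δ / 2) ^ 2) ^ N) = (#G * (1 - δ / 2) ^ N) ^ 2 := by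
          rw [← pow_mul, mul_comm 2 N, pow_mul]; ring
      _ ≤ M.trace ^ 2 := by
          have : 0 ≤ 1 - δ / 2 := by linarith
          gcongr
      _ ≤ M.rank * ∑ ε, ∑ ε', M ε ε' ^ 2 := sq_trace_le_rank_mul_sum_sq M
      _ ≤ W * (#G * F) := by gcongr
      _ = #G * (W * F) := by ring
  exact le_of_mul_le_mul_left h (by exact_mod_cast hG.card_pos)

lemma card_exponentsLE_le [Fintype τ] [DecidableEq τ] {N D : ℕ}
    (hN : 4 * Fintype.card τ * (D + 4) ≤ N) :
    (#(exponentsLE τ (D * N)) : ℝ) ≤ (13 / 10) ^ N := by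
  set W : ℝ := ↑(#(exponentsLE τ (D * N)))
  set x : ℝ := 1 - 1 / (16 * (D + 1)) with hx
  have inv_le : 1 / (16 * ((D : ℝ) + 1)) ≤ 1 / 16 :=
    one_div_le_one_div_of_le (by norm_num) (by linarith [D.cast_nonneg (α := ℝ)])
  have inv_pos : 0 < 1 / (16 * ((D : ℝ) + 1)) := by positivity
  have pow_ge : 15 / 16 ≤ x ^ D := by
    calc (15 / 16 : ℝ) ≤ 1 + D * -(1 / (16 * (D + 1))) := by
          have : D * (1 / (16 * ((D : ℝ) + 1))) ≤ 1 / 16 := by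
            rw [mul_one_div, div_le_div_iff₀ (by positivity) (by norm_num)]
            linarith
          linarith
      _ ≤ (1 + -(1 / (16 * (D + 1)))) ^ D := one_add_mul_le_pow (by linarith) D
      _ = x ^ D := by rw [hx, sub_eq_add_neg]
  have inv_one_sub_le : (1 - x)⁻¹ ≤ 2 ^ (D + 4) := by
    have : (D : ℝ) + 1 ≤ 2 ^ D := by exact_mod_cast D.lt_two_pow_self
    rw [hx, sub_sub_cancel, one_div, inv_inv, pow_add]
    linarith
  have W_mul_le : W * (15 / 16) ^ N ≤ (2 ^ (D + 4)) ^ Fintype.card τ := by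
    calc W * (15 / 16) ^ N ≤ W * x ^ (D * N) := by rw [pow_mul]; gcongr
      _ ≤ (1 - x)⁻¹ ^ Fintype.card τ :=
          card_exponentsLE_mul_pow_le τ (D * N) (by linarith) (by linarith)
      _ ≤ (2 ^ (D + 4)) ^ Fintype.card τ := by
          have : 0 ≤ (1 - x)⁻¹ := inv_nonneg.mpr (by linarith)
          gcongr
  refine le_of_mul_le_mul_right ?_ (by positivity : (0 : ℝ) < (15 / 16) ^ N)
  refine W_mul_le.trans (le_of_pow_le_pow_left₀ four_ne_zero (by positivity) ?_)
  calc (((2 : ℝ) ^ (D + 4)) ^ Fintype.card τ) ^ 4 = 2 ^ (4 * Fintype.card τ * (D + 4)) := by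
        rw [← pow_mul, ← pow_mul]; congr 1; ring
    _ ≤ 2 ^ N := pow_le_pow_right₀ one_le_two hN
    _ ≤ ((13 / 10 * (15 / 16)) ^ 4) ^ N := by gcongr; norm_num
    _ = ((13 / 10) ^ N * (15 / 16) ^ N) ^ 4 := by
        rw [← mul_pow, ← pow_mul, ← pow_mul, mul_comm 4 N]

lemma exists_signs_forall_card_lt [Nonempty ι] [Fintype τ] {P : ι → MvPolynomial τ ℝ} {D : ℕ}
    (hP : ∀ k, (P k).totalDegree ≤ D)
    (hcard : 4 * Fintype.card τ * (D + 4) ≤ Fintype.card ι) :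
    ∃ ε : ι → ℤˣ, ∀ z : τ → ℝ,
      Fintype.card ι < 40 * #{k | 1 / 16 < |MvPolynomial.eval z (P k) - ε k|} := by
  classical
  by_contra! hclose
  choose z hz using hclose
  set N := Fintype.card ι
  set W : ℝ := ↑(#(exponentsLE τ (D * N)))
  let bad (ε : ι → ℤˣ) : Finset ι := {k | 1 / 16 < |MvPolynomial.eval (z ε) (P k) - ε k|}
  let small : Finset (Finset ι) := {B | 40 * #B ≤ N}
  have fiber_le (B : Finset ι) :
      #{ε | bad ε = B} * ((31 / 32) ^ 2) ^ N ≤ W * (2 ^ #B * (11 / 10) ^ N) := by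
    have h := card_approximable_signs_le hP (δ := 1 / 16) (by norm_num) (by norm_num)
      (G := {ε | bad ε = B}) (B := B) (z := z) fun ε hε k hk => by
        simpa [← (mem_filter.mp hε).2, bad] using hk
    rw [show 1 - (1 / 16 : ℝ) / 2 = 31 / 32 by norm_num] at h
    refine h.trans (mul_le_mul_of_nonneg_left ?_ (Nat.cast_nonneg _))
    exact mul_le_mul_of_nonneg_left
      (pow_le_pow_left₀ (by norm_num) (by norm_num) _) (by positivity)
  have card_signs : (2 : ℝ) ^ N = ∑ B ∈ small, (#{ε | bad ε = B} : ℝ) := by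
    have h := card_eq_sum_card_fiberwise (f := bad) (s := univ) (t := small) fun ε _ => by
      simpa [small, bad] using hz ε
    rw [card_univ, Fintype.card_fun, Fintype.card_units_int] at h
    exact_mod_cast h
  have upper : (2 : ℝ) ^ N * ((31 / 32) ^ 2) ^ N ≤ (13 / 10 * (11 / 10) * (23 / 20)) ^ N := by
    calc (2 : ℝ) ^ N * ((31 / 32) ^ 2) ^ N
        = ∑ B ∈ small, (#{ε | bad ε = B} : ℝ) * ((31 / 32) ^ 2) ^ N := by rw [card_signs, sum_mul]
      _ ≤ ∑ B ∈ small, W * (2 ^ #B * (11 / 10) ^ N) := sum_le_sum fun B _ => fiber_le B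
      _ = W * (11 / 10) ^ N * ∑ B ∈ small, 2 ^ #B := by
          rw [mul_sum]; exact sum_congr rfl fun B _ => by ring
      _ ≤ (13 / 10) ^ N * (11 / 10) ^ N * (23 / 20) ^ N := by
          gcongr
          · exact card_exponentsLE_le hcard
          · exact sum_two_pow_card_le ι
      _ = (13 / 10 * (11 / 10) * (23 / 20)) ^ N := by rw [mul_pow, mul_pow]
  -- The constants are chosen so that `2 (31/32)² > (13/10) (11/10) (23/20)`.
  rw [← mul_pow] at upper
  exact upper.not_gt (pow_lt_pow_left₀ (by norm_num) (by norm_num) Fintype.card_ne_zero)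

end SignPatterns

section TrigonometricPolynomials

variable {d : ℕ}

/-- The exponential `x ↦ exp (i ⟨k, x⟩)`. -/
noncomputable def trigMonomial (k : Fin d → ℤ) (x : Fin d → ℝ) : ℂ :=
  Complex.exp (Complex.I * ∑ j, (k j : ℂ) * (x j : ℂ))

lemma trigMonomial_eq_prod (k : Fin d → ℤ) (x : Fin d → ℝ) :
    trigMonomial k x = ∏ j, Complex.exp (Complex.I * (k j * x j)) := by
  rw [trigMonomial, mul_sum, Complex.exp_sum]

@[simp]
lemma trigMonomial_zero (x : Fin d → ℝ) : trigMonomial 0 x = 1 := by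
  simp [trigMonomial]

lemma conj_trigMonomial (k : Fin d → ℤ) (x : Fin d → ℝ) :
    starRingEnd ℂ (trigMonomial k x) = trigMonomial (-k) x := by
  simp [trigMonomial, ← Complex.exp_conj]

lemma trigMonomial_mul_conj (k l : Fin d → ℤ) (x : Fin d → ℝ) :
    trigMonomial k x * starRingEnd ℂ (trigMonomial l x) = trigMonomial (k - l) x := by
  rw [conj_trigMonomial, trigMonomial, trigMonomial, trigMonomial, ← Complex.exp_add, ← mul_add,
    ← sum_add_distrib]
  simp [sub_eq_add_neg, add_mul]

lemma trigMonomial_sub (k : Fin d → ℤ) (x y : Fin d → ℝ) :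
    trigMonomial k (x - y) = trigMonomial k x * starRingEnd ℂ (trigMonomial k y) := by
  rw [conj_trigMonomial, trigMonomial, trigMonomial, trigMonomial, ← Complex.exp_add, ← mul_add,
    ← sum_add_distrib]
  simp [sub_eq_add_neg, mul_add]

lemma re_trigMonomial (k : Fin d → ℤ) (x : Fin d → ℝ) :
    (trigMonomial k x).re = Real.cos (∑ j, k j * x j) := by
  have : Complex.I * ∑ j, (k j : ℂ) * (x j : ℂ) = (∑ j, k j * x j : ℝ) * Complex.I := by
    push_cast
    ring
  rw [trigMonomial, this, Complex.exp_ofReal_mul_I_re]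

lemma continuous_trigMonomial (k : Fin d → ℤ) : Continuous (trigMonomial k) := by
  unfold trigMonomial
  fun_prop

/-- The complex trigonometric polynomials with spectrum in `∏_j [-n_j, n_j]`. -/
noncomputable def trigPolynomials (n : Fin d → ℕ) : Submodule ℂ ((Fin d → ℝ) → ℂ) :=
  Submodule.span ℂ (trigMonomial '' trigBox d n)

lemma trigMonomial_mem_trigPolynomials {n : Fin d → ℕ} {k : Fin d → ℤ} (hk : ∀ j, |k j| ≤ n j) :
    trigMonomial k ∈ trigPolynomials n :=
  Submodule.subset_span ⟨k, mem_coe.mpr <| mem_Icc.mpr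
    ⟨fun j => (abs_le.mp (hk j)).1, fun j => (abs_le.mp (hk j)).2⟩, rfl⟩

lemma mem_trigClass_of_mem_trigPolynomials {n : Fin d → ℕ} {t : (Fin d → ℝ) → ℝ}
    (ht : (fun x => (t x : ℂ)) ∈ trigPolynomials n) (ht_le : ∀ x, |t x| ≤ 1) :
    t ∈ TrigClass d n := by
  obtain ⟨c, c_mem, hc⟩ := Finsupp.mem_span_image_iff_linearCombination ℂ |>.mp ht
  rw [Finsupp.linearCombination_apply_of_mem_supported ℂ c_mem] at hc
  have eval_eq (x : Fin d → ℝ) : ∑ k ∈ trigBox d n, c k * trigMonomial k x = t x := by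
    simpa using congrFun hc x
  have neg_mem (k : Fin d → ℤ) : k ∈ trigBox d n ↔ -k ∈ trigBox d n := by
    simp only [trigBox, mem_Icc, Pi.le_def, Pi.neg_apply, neg_le_neg_iff, neg_le, and_comm]
  have conj_eval_eq (x : Fin d → ℝ) :
      ∑ k ∈ trigBox d n, starRingEnd ℂ (c (-k)) * trigMonomial k x = t x := by
    rw [← Complex.conj_ofReal, ← eval_eq, map_sum]
    refine sum_equiv (Equiv.neg _) neg_mem fun k _ => ?_
    rw [map_mul, conj_trigMonomial, Equiv.neg_apply, neg_neg]
  refine ⟨⟨fun k => (c k + starRingEnd ℂ (c (-k))) / 2, fun k => ?_, fun x => ?_⟩,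
    fun x _ => ht_le x⟩
  · simp [add_comm, Complex.conj_ofNat]
  · calc (t x : ℂ) = (t x + t x) / 2 := by ring
      _ = ∑ k ∈ trigBox d n, (c k + starRingEnd ℂ (c (-k))) / 2 * trigMonomial k x := by
        nth_rewrite 1 [← eval_eq]
        rw [← conj_eval_eq, ← sum_add_distrib, sum_div]
        exact sum_congr rfl fun k _ => by ring

end TrigonometricPolynomials

section FejerKernel

variable {d : ℕ}

/-- The indices of the uniform grid with `n_j + 1` points on the `j`-th axis. They also index the
frequencies `0 ≤ k_j ≤ n_j`. -/
abbrev GridIndex (n : Fin d → ℕ) : Type := ∀ j, Fin (n j + 1)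

/-- The frequency vector in `∏_j [0, n_j]` with a given index. -/
def freq {n : Fin d → ℕ} (a : GridIndex n) : Fin d → ℤ := fun j => (a j : ℕ)

/-- The point of the uniform grid on `[-π, π)^d` with a given index. -/
noncomputable def gridPoint {n : Fin d → ℕ} (κ : GridIndex n) : Fin d → ℝ :=
  fun j => -Real.pi + 2 * Real.pi * (κ j : ℕ) / (n j + 1 : ℕ)

lemma abs_freq_sub_freq_le {n : Fin d → ℕ} (a b : GridIndex n) (j : Fin d) :
    |freq a j - freq b j| ≤ n j := by
  rw [abs_le, freq, freq]
  have := (a j).is_le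
  have := (b j).is_le
  omega

lemma sum_exp_gridPoint_eq_zero {M : ℕ} {k : ℤ} (hk : ¬ (M : ℤ) ∣ k) :
    ∑ i : Fin M, Complex.exp (Complex.I *
      (k * (-Real.pi + 2 * Real.pi * (i : ℕ) / M : ℝ))) = 0 := by
  rcases eq_or_ne M 0 with rfl | hM
  · simp
  set ζ := Complex.exp (2 * Real.pi * Complex.I / M) ^ k with hζ
  have ζ_prim := Complex.isPrimitiveRoot_exp M hM
  have ζ_ne_one : ζ ≠ 1 := fun h => hk ((ζ_prim.zpow_eq_one_iff_dvd k).mp h)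
  have ζ_pow : ζ ^ M = 1 := by
    rw [hζ, ← zpow_natCast, ← zpow_mul, mul_comm k, zpow_mul, zpow_natCast, ζ_prim.pow_eq_one,
      one_zpow]
  have geom_sum : ∑ i ∈ range M, ζ ^ i = 0 := by
    rw [geom_sum_eq ζ_ne_one, ζ_pow, sub_self, zero_div]
  calc ∑ i : Fin M, Complex.exp (Complex.I * (k * (-Real.pi + 2 * Real.pi * (i : ℕ) / M : ℝ)))
      = ∑ i : Fin M, Complex.exp (-(k * Real.pi * Complex.I)) * ζ ^ (i : ℕ) := by
        refine sum_congr rfl fun i _ => ?_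
        rw [hζ, ← Complex.exp_int_mul, ← Complex.exp_nat_mul, ← Complex.exp_add]
        congr 1
        push_cast
        ring
    _ = 0 := by
        rw [← mul_sum, Fin.sum_univ_eq_sum_range (ζ ^ ·), geom_sum, mul_zero]

lemma sum_trigMonomial_gridPoint_eq_zero {n : Fin d → ℕ} {k : Fin d → ℤ} {j : Fin d}
    (hk : ¬ ((n j + 1 : ℕ) : ℤ) ∣ k j) :
    ∑ κ : GridIndex n, trigMonomial k (gridPoint κ) = 0 := by
  simp only [trigMonomial_eq_prod, gridPoint]
  rw [← Fintype.piFinset_univ, ← prod_univ_sum (fun _ => univ) fun j (i : Fin (n j + 1)) =>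
    Complex.exp (Complex.I * (k j * (-Real.pi + 2 * Real.pi * (i : ℕ) / (n j + 1 : ℕ) : ℝ)))]
  exact prod_eq_zero (mem_univ j) (sum_exp_gridPoint_eq_zero hk)

lemma sum_trigMonomial_freq_sub_freq {n : Fin d → ℕ} (a b : GridIndex n) :
    ∑ κ : GridIndex n, trigMonomial (freq a - freq b) (gridPoint κ) =
      if a = b then (Fintype.card (GridIndex n) : ℂ) else 0 := by
  split_ifs with hab
  · simp [hab]
  · obtain ⟨j, hj⟩ := Function.ne_iff.mp hab
    refine sum_trigMonomial_gridPoint_eq_zero (j := j) fun hdvd => hj ?_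
    have h := Int.eq_zero_of_abs_lt_dvd hdvd <|
      (abs_freq_sub_freq_le a b j).trans_lt (by push_cast; omega)
    rw [Pi.sub_apply, freq, freq] at h
    exact Fin.ext (by omega)

/-- The multivariate Fejér kernel with spectrum in `∏_j [-n_j, n_j]`, normalised to have maximum
`1`. -/
noncomputable def fejerKernel (n : Fin d → ℕ) (x : Fin d → ℝ) : ℝ :=
  (‖∑ a : GridIndex n, trigMonomial (freq a) x‖ / Fintype.card (GridIndex n)) ^ 2

lemma fejerKernel_nonneg (n : Fin d → ℕ) (x : Fin d → ℝ) : 0 ≤ fejerKernel n x := sq_nonneg _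

lemma continuous_fejerKernel (n : Fin d → ℕ) : Continuous (fejerKernel n) :=
  ((continuous_finsetSum _ fun _ _ => continuous_trigMonomial _).norm.div_const _).pow 2

lemma coe_fejerKernel (n : Fin d → ℕ) (x : Fin d → ℝ) :
    (fejerKernel n x : ℂ) =
      (∑ a : GridIndex n, ∑ b : GridIndex n, trigMonomial (freq a - freq b) x) /
        (Fintype.card (GridIndex n) : ℂ) ^ 2 := by
  rw [fejerKernel, div_pow, Complex.ofReal_div, Complex.ofReal_pow, ← Complex.mul_conj', map_sum,
    sum_mul_sum]
  simp only [trigMonomial_mul_conj, Complex.ofReal_pow, Complex.ofReal_natCast]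

lemma fejerKernel_sub_mem_trigPolynomials (n : Fin d → ℕ) (y : Fin d → ℝ) :
    (fun x => (fejerKernel n (x - y) : ℂ)) ∈ trigPolynomials n := by
  have expand : (fun x => (fejerKernel n (x - y) : ℂ)) =
      ∑ a : GridIndex n, ∑ b : GridIndex n,
        (starRingEnd ℂ (trigMonomial (freq a - freq b) y) /
          (Fintype.card (GridIndex n) : ℂ) ^ 2) • trigMonomial (freq a - freq b) := by
    ext x
    simp only [coe_fejerKernel, trigMonomial_sub, sum_div, Finset.sum_apply, Pi.smul_apply,
      smul_eq_mul]
    exact sum_congr rfl fun a _ => sum_congr rfl fun b _ => by ring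
  rw [expand]
  exact Submodule.sum_mem _ fun a _ => Submodule.sum_mem _ fun b _ =>
    Submodule.smul_mem _ _ (trigMonomial_mem_trigPolynomials (abs_freq_sub_freq_le a b))

lemma sum_fejerKernel_sub_gridPoint (n : Fin d → ℕ) (x : Fin d → ℝ) :
    ∑ κ : GridIndex n, fejerKernel n (x - gridPoint κ) = 1 := by
  have translate (k : Fin d → ℤ) : ∑ κ : GridIndex n, trigMonomial k (x - gridPoint κ) =
      trigMonomial k x * starRingEnd ℂ (∑ κ : GridIndex n, trigMonomial k (gridPoint κ)) := by
    simp only [trigMonomial_sub, map_sum, mul_sum]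
  have card_ne_zero : (Fintype.card (GridIndex n) : ℂ) ≠ 0 := by
    exact_mod_cast Fintype.card_ne_zero
  rw [← Complex.ofReal_inj]
  calc ((∑ κ : GridIndex n, fejerKernel n (x - gridPoint κ) : ℝ) : ℂ)
      = (∑ a : GridIndex n, ∑ b : GridIndex n, ∑ κ : GridIndex n,
          trigMonomial (freq a - freq b) (x - gridPoint κ)) /
            (Fintype.card (GridIndex n) : ℂ) ^ 2 := by
        rw [Complex.ofReal_sum, sum_congr rfl fun κ _ => coe_fejerKernel n _, ← sum_div, sum_comm]
        exact congrArg (· / _) (sum_congr rfl fun a _ => sum_comm)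
    _ = (Fintype.card (GridIndex n) : ℂ) ^ 2 / (Fintype.card (GridIndex n) : ℂ) ^ 2 := by
        simp only [translate, sum_trigMonomial_freq_sub_freq, apply_ite (starRingEnd ℂ),
          map_natCast, map_zero, mul_ite, mul_zero, sum_ite_eq, mem_univ, if_true, sub_self,
          trigMonomial_zero, one_mul, sum_const, card_univ, nsmul_eq_mul, sq]
    _ = (1 : ℝ) := by rw [div_self (pow_ne_zero 2 card_ne_zero), Complex.ofReal_one]

lemma one_sub_sq_le_fejerKernel {n : Fin d → ℕ} {x : Fin d → ℝ} {η : ℝ} (hη : η ≤ 1)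
    (hx : ∀ a : GridIndex n, |∑ j, freq a j * x j| ≤ η) :
    1 - η ^ 2 ≤ fejerKernel n x := by
  have re_ge (a : GridIndex n) : 1 - η ^ 2 / 2 ≤ (trigMonomial (freq a) x).re := by
    rw [re_trigMonomial]
    have : (∑ j, freq a j * x j) ^ 2 ≤ η ^ 2 := sq_le_sq' (abs_le.mp (hx a)).1 (abs_le.mp (hx a)).2
    linarith [Real.one_sub_sq_div_two_le_cos (x := ∑ j, freq a j * x j)]
  have mean_ge :
      1 - η ^ 2 / 2 ≤
        ‖∑ a : GridIndex n, trigMonomial (freq a) x‖ / Fintype.card (GridIndex n) := by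
    rw [le_div_iff₀ (by exact_mod_cast Fintype.card_pos)]
    calc (1 - η ^ 2 / 2) * Fintype.card (GridIndex n) = ∑ _a : GridIndex n, (1 - η ^ 2 / 2) := by
          rw [sum_const, card_univ, nsmul_eq_mul, mul_comm]
      _ ≤ ∑ a : GridIndex n, (trigMonomial (freq a) x).re := sum_le_sum fun a _ => re_ge a
      _ = (∑ a : GridIndex n, trigMonomial (freq a) x).re := (Complex.re_sum _ _).symm
      _ ≤ ‖∑ a : GridIndex n, trigMonomial (freq a) x‖ := Complex.re_le_norm _
  have hη₀ : 0 ≤ η := (abs_nonneg _).trans (hx fun _ => 0)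
  calc 1 - η ^ 2 ≤ (1 - η ^ 2 / 2) ^ 2 := by nlinarith [sq_nonneg (η ^ 2)]
    _ ≤ fejerKernel n x := pow_le_pow_left₀ (by nlinarith) mean_ge 2

end FejerKernel

section FejerSum

lemma abs_sum_sign_mul_le {α : Type*} {s : Finset α} {w : α → ℝ} (hw : ∀ a ∈ s, 0 ≤ w a)
    (ε : α → ℤˣ) : |∑ a ∈ s, ε a * w a| ≤ ∑ a ∈ s, w a := by
  refine (abs_sum_le_sum_abs _ _).trans (sum_le_sum fun a ha => ?_)
  rw [abs_mul, abs_unit_intCast, one_mul, abs_of_nonneg (hw a ha)]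

lemma abs_sum_sign_mul_sub_le {α : Type*} [Fintype α] {w : α → ℝ}
    (hw : ∀ a, 0 ≤ w a) (hw_sum : ∑ a, w a = 1) (ε : α → ℤˣ) (a : α) :
    |∑ b, ε b * w b - ε a| ≤ 2 * (1 - w a) := by
  classical
  have sum_compl : ∑ b ∈ univ.erase a, w b = 1 - w a := by
    rw [← hw_sum, ← add_sum_erase univ w (mem_univ a), add_sub_cancel_left]
  have split : ∑ b, ε b * w b - ε a = ∑ b ∈ univ.erase a, ε b * w b - ε a * (1 - w a) := by
    rw [← add_sum_erase univ (fun b => (ε b : ℝ) * w b) (mem_univ a)]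
    ring
  have one_sub_nonneg : 0 ≤ 1 - w a := sum_compl ▸ sum_nonneg fun b _ => hw b
  calc |∑ b, ε b * w b - ε a|
      ≤ |∑ b ∈ univ.erase a, ε b * w b| + |ε a * (1 - w a)| := split ▸ abs_sub _ _
    _ ≤ (1 - w a) + (1 - w a) := by
        rw [abs_mul, abs_unit_intCast, one_mul, abs_of_nonneg one_sub_nonneg]
        gcongr
        exact sum_compl ▸ abs_sum_sign_mul_le (fun b _ => hw b) ε
    _ = 2 * (1 - w a) := (two_mul _).symm

variable {d : ℕ} {n : Fin d → ℕ}

/-- The trigonometric polynomial that nearly takes the prescribed sign `ε κ` at each point `κ` of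
the grid. -/
noncomputable def fejerSum (ε : GridIndex n → ℤˣ) (x : Fin d → ℝ) : ℝ :=
  ∑ κ, ε κ * fejerKernel n (x - gridPoint κ)

lemma abs_fejerSum_le_one (ε : GridIndex n → ℤˣ) (x : Fin d → ℝ) : |fejerSum ε x| ≤ 1 :=
  (abs_sum_sign_mul_le (fun _ _ => fejerKernel_nonneg _ _) ε).trans_eq
    (sum_fejerKernel_sub_gridPoint n x)

lemma continuous_fejerSum (ε : GridIndex n → ℤˣ) : Continuous (fejerSum ε) :=
  continuous_finsetSum _ fun _ _ =>
    continuous_const.mul ((continuous_fejerKernel n).comp (continuous_sub_right _))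

lemma fejerSum_mem_trigClass (ε : GridIndex n → ℤˣ) : fejerSum ε ∈ TrigClass d n := by
  refine mem_trigClass_of_mem_trigPolynomials ?_ (abs_fejerSum_le_one ε)
  have expand : (fun x => (fejerSum ε x : ℂ)) =
      ∑ κ, ((ε κ : ℤ) : ℂ) • fun x => (fejerKernel n (x - gridPoint κ) : ℂ) := by
    ext x
    simp [fejerSum]
  rw [expand]
  exact Submodule.sum_mem _ fun κ _ =>
    Submodule.smul_mem _ _ (fejerKernel_sub_mem_trigPolynomials n _)

lemma abs_fejerSum_gridPoint_add_sub_le (ε : GridIndex n → ℤˣ) (κ : GridIndex n)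
    {y : Fin d → ℝ} {η : ℝ} (hη : η ≤ 1) (hy : ∀ a : GridIndex n, |∑ j, freq a j * y j| ≤ η) :
    |fejerSum ε (gridPoint κ + y) - ε κ| ≤ 2 * η ^ 2 := by
  refine (abs_sum_sign_mul_sub_le (fun _ => fejerKernel_nonneg _ _)
    (sum_fejerKernel_sub_gridPoint n _) ε κ).trans ?_
  rw [add_sub_cancel_left]
  linarith [one_sub_sq_le_fejerKernel hη hy]

end FejerSum

section GridIntegral

lemma mul_measureReal_le_setIntegral_of_le_sum_translates {ι G : Type*} [Fintype ι] [AddGroup G]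
    [MeasurableSpace G] [MeasurableAdd G] {μ : Measure G} [μ.IsAddLeftInvariant]
    {S T : Set G} (hS : MeasurableSet S) (hμS : μ S ≠ ⊤) {p : ι → G}
    (hdisj : Pairwise fun i j => Disjoint ((p i + ·) '' S) ((p j + ·) '' S))
    (hsub : ∀ i, (p i + ·) '' S ⊆ T) {h : G → ℝ} (h_nonneg : ∀ x, 0 ≤ h x)
    (h_int : IntegrableOn h T μ) {c : ℝ} (hc : ∀ y ∈ S, c ≤ ∑ i, h (p i + y)) :
    c * μ.real S ≤ ∫ x in T, h x ∂μ := by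
  have preserving (i : ι) : MeasurePreserving (p i + ·) μ μ := measurePreserving_add_left μ (p i)
  have embedding (i : ι) : MeasurableEmbedding (p i + ·) := measurableEmbedding_addLeft (p i)
  have translate_int (i : ι) : IntegrableOn (fun y => h (p i + y)) S μ :=
    ((preserving i).integrableOn_image (embedding i)).mp (h_int.mono_set (hsub i))
  calc c * μ.real S = μ.real S • c := mul_comm _ _
    _ ≤ ∫ y in S, ∑ i, h (p i + y) ∂μ :=
        setIntegral_ge_of_const_le hS hμS hc (integrable_finsetSum _ fun i _ => translate_int i)
    _ = ∑ i, ∫ y in S, h (p i + y) ∂μ := integral_finsetSum _ fun i _ => translate_int i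
    _ = ∑ i, ∫ x in (p i + ·) '' S, h x ∂μ :=
        sum_congr rfl fun i _ => ((preserving i).setIntegral_image_emb (embedding i) h S).symm
    _ = ∫ x in ⋃ i, (p i + ·) '' S, h x ∂μ :=
        (integral_iUnion_fintype (fun i => (embedding i).measurableSet_image.mpr hS) hdisj
          fun i => h_int.mono_set (hsub i)).symm
    _ ≤ ∫ x in T, h x ∂μ :=
        setIntegral_mono_set h_int (.of_forall h_nonneg) (Set.iUnion_subset hsub).eventuallyLE

variable {d : ℕ} {n : Fin d → ℕ}

/-- The fundamental cube `[-π, π]^d`. -/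
abbrev torusCube (d : ℕ) : Set (Fin d → ℝ) := Set.univ.pi fun _ => Set.Icc (-Real.pi) Real.pi

lemma isCompact_torusCube (d : ℕ) : IsCompact (torusCube d) :=
  isCompact_univ_pi fun _ => isCompact_Icc

instance isFiniteMeasure_restrict_torusCube (d : ℕ) :
    IsFiniteMeasure (volume.restrict (torusCube d)) :=
  isFiniteMeasure_restrict.mpr (isCompact_torusCube d).measure_ne_top

/-- The box `∏_j [0, δ / (n_j + 1)]`; its translates to the points of the grid are disjoint when
`δ < 2 π`. -/
noncomputable def gridBox (n : Fin d → ℕ) (δ : ℝ) : Set (Fin d → ℝ) :=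
  Set.Icc 0 fun j => δ / (n j + 1 : ℕ)

lemma gridPoint_add_lt {κ κ' : GridIndex n} {j : Fin d} (hκ : κ j < κ' j) {δ : ℝ}
    (hδ : δ < 2 * Real.pi) : gridPoint κ j + δ / (n j + 1 : ℕ) < gridPoint κ' j := by
  have index_le : ((κ j : ℕ) : ℝ) + 1 ≤ (κ' j : ℕ) := by exact_mod_cast hκ
  rw [gridPoint, gridPoint, add_assoc, ← add_div]
  gcongr
  nlinarith [Real.pi_pos]

lemma pairwise_disjoint_translates_gridBox {δ : ℝ} (hδ : δ < 2 * Real.pi) :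
    Pairwise fun κ κ' : GridIndex n =>
      Disjoint ((gridPoint κ + ·) '' gridBox n δ) ((gridPoint κ' + ·) '' gridBox n δ) := by
  intro κ κ' hne
  rw [gridBox, Set.image_const_add_Icc, Set.image_const_add_Icc, Set.disjoint_left]
  rintro x ⟨hx_ge, hx_le⟩ ⟨hx_ge', hx_le'⟩
  obtain ⟨j, hj⟩ := Function.ne_iff.mp hne
  rcases lt_or_gt_of_ne hj with hlt | hlt
  · exact ((hx_le j).trans_lt (gridPoint_add_lt hlt hδ)).not_ge (by simpa using hx_ge' j)
  · exact ((hx_le' j).trans_lt (gridPoint_add_lt hlt hδ)).not_ge (by simpa using hx_ge j)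

lemma image_gridBox_subset_torusCube {δ : ℝ} (hδ : δ ≤ 2 * Real.pi) (κ : GridIndex n) :
    (gridPoint κ + ·) '' gridBox n δ ⊆ torusCube d := by
  rintro _ ⟨y, hy, rfl⟩ j -
  have hM : (0 : ℝ) < (n j + 1 : ℕ) := by positivity
  have index_le : ((κ j : ℕ) : ℝ) + 1 ≤ (n j + 1 : ℕ) := by exact_mod_cast (κ j).isLt
  have step_nonneg : 0 ≤ 2 * Real.pi * (κ j : ℕ) / (n j + 1 : ℕ) := by positivity
  have step_le : 2 * Real.pi * (κ j : ℕ) / (n j + 1 : ℕ) + δ / (n j + 1 : ℕ) ≤ 2 * Real.pi := by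
    rw [← add_div, div_le_iff₀ hM]
    nlinarith [Real.pi_pos]
  have hy₀ := hy.1 j
  have hy₁ := hy.2 j
  rw [Pi.zero_apply] at hy₀
  simp only [Pi.add_apply, gridPoint, Set.mem_Icc]
  constructor <;> linarith

lemma volume_real_gridBox {δ : ℝ} (hδ : 0 ≤ δ) :
    volume.real (gridBox n δ) = δ ^ d / Fintype.card (GridIndex n) := by
  rw [gridBox, Measure.real,
    Real.volume_Icc_pi_toReal (a := 0) fun j => div_nonneg hδ (Nat.cast_nonneg _)]
  simp only [Pi.zero_apply, sub_zero, prod_div_distrib, prod_const, card_univ, Fintype.card_fin,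
    Fintype.card_pi, Nat.cast_prod]

lemma abs_sum_freq_mul_le {δ : ℝ} {y : Fin d → ℝ} (hy : y ∈ gridBox n δ) (a : GridIndex n) :
    |∑ j, freq a j * y j| ≤ d * δ := by
  have term_le (j : Fin d) : |freq a j * y j| ≤ δ := by
    have hy_nonneg : 0 ≤ y j := hy.1 j
    have freq_le : (freq a j : ℝ) ≤ (n j + 1 : ℕ) := by
      rw [freq, Int.cast_natCast]
      exact_mod_cast (a j).isLt.le
    have freq_nonneg : 0 ≤ (freq a j : ℝ) := by
      rw [freq, Int.cast_natCast]
      exact Nat.cast_nonneg _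
    rw [abs_of_nonneg (mul_nonneg freq_nonneg hy_nonneg)]
    calc (freq a j : ℝ) * y j ≤ (n j + 1 : ℕ) * (δ / (n j + 1 : ℕ)) :=
          mul_le_mul freq_le (hy.2 j) hy_nonneg (Nat.cast_nonneg _)
      _ = δ := mul_div_cancel₀ _ (by positivity)
  calc |∑ j, freq a j * y j| ≤ ∑ j, |freq a j * y j| := abs_sum_le_sum_abs _ _
    _ ≤ ∑ _j : Fin d, δ := sum_le_sum fun j _ => term_le j
    _ = d * δ := by simp

end GridIntegral

section LowerBound

variable {d : ℕ} {n : Fin d → ℕ}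

/-- The polynomial giving the value at the grid point with index `κ` of a sum of `m` tensor
products, as a function of the values of the univariate factors at the nodes of the axes: the
variable `(s, ⟨j, i⟩)` stands for the value of the `j`-th factor of the `s`-th product at the
`i`-th node. -/
noncomputable def tensorPolynomial (m : ℕ) (κ : GridIndex n) :
    MvPolynomial (Fin m × Σ j, Fin (n j + 1)) ℝ :=
  ∑ s, ∏ j, MvPolynomial.X (s, ⟨j, κ j⟩)

lemma totalDegree_tensorPolynomial_le (m : ℕ) (κ : GridIndex n) :
    (tensorPolynomial m κ).totalDegree ≤ d := by
  refine MvPolynomial.totalDegree_finsetSum_le fun s _ => ?_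
  refine (MvPolynomial.totalDegree_finsetProd _ _).trans ?_
  simp

lemma eval_tensorPolynomial {m : ℕ} (u : Fin m → Fin d → ℝ → ℝ) (y : Fin d → ℝ)
    (κ : GridIndex n) :
    MvPolynomial.eval
        (fun v => u v.1 v.2.1 (-Real.pi + 2 * Real.pi * (v.2.2 : ℕ) / (n v.2.1 + 1 : ℕ) + y v.2.1))
        (tensorPolynomial m κ) =
      ∑ s, ∏ j, u s j ((gridPoint κ + y) j) := by
  simp [tensorPolynomial, gridPoint]

lemma card_div_le_sum_abs_sub {ι : Type*} [Fintype ι] {ε : ι → ℤˣ} {t v : ι → ℝ}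
    (ht : ∀ k, |t k - ε k| ≤ 1 / 32)
    (hv : Fintype.card ι < 40 * #{k | 1 / 16 < |v k - ε k|}) :
    (Fintype.card ι : ℝ) / 1280 ≤ ∑ k, |t k - v k| := by
  set bad : Finset ι := {k | 1 / 16 < |v k - ε k|}
  have card_le : (Fintype.card ι : ℝ) ≤ 40 * #bad := by exact_mod_cast hv.le
  calc (Fintype.card ι : ℝ) / 1280 ≤ #bad * (1 / 32) := by linarith
    _ = ∑ _k ∈ bad, (1 / 32 : ℝ) := by rw [sum_const, nsmul_eq_mul]
    _ ≤ ∑ k ∈ bad, |t k - v k| := sum_le_sum fun k hk => by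
        have := (mem_filter.mp hk).2
        rw [abs_sub_comm (t k)]
        linarith [abs_sub_le (v k) (t k) (ε k), ht k]
    _ ≤ ∑ k, |t k - v k| :=
        sum_le_sum_of_subset_of_nonneg (subset_univ _) fun _ _ _ => abs_nonneg _

lemma exists_trigClass_forall_le_integral {m : ℕ}
    (hm : 4 * (m * ∑ j, (n j + 1)) * (d + 4) ≤ ∏ j, (n j + 1)) :
    ∃ t ∈ TrigClass d n, ∀ u : Fin m → Fin d → ℝ → ℝ,
      IntegrableOn (fun x : Fin d → ℝ => ∑ s, ∏ i, u s i (x i)) (torusCube d) →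
      (1 / (8 * (d + 1))) ^ d / 1280 ≤ ∫ x in torusCube d, |t x - ∑ s, ∏ i, u s i (x i)| := by
  set δ : ℝ := 1 / (8 * (d + 1)) with hδ
  have δ_pos : 0 < δ := by positivity
  have d_mul_δ_le : d * δ ≤ 1 / 8 := by
    rw [hδ, mul_one_div, div_le_div_iff₀ (by positivity) (by norm_num)]
    linarith
  have δ_lt : δ < 2 * Real.pi := by
    have : δ ≤ 1 / 1 := one_div_le_one_div_of_le one_pos (by linarith [d.cast_nonneg (α := ℝ)])
    linarith [Real.pi_gt_three]
  obtain ⟨ε, hε⟩ := exists_signs_forall_card_lt (totalDegree_tensorPolynomial_le (n := n) m)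
    (by simpa using hm)
  refine ⟨fejerSum ε, fejerSum_mem_trigClass ε, fun u hu => ?_⟩
  have error_int : IntegrableOn (fun x => |fejerSum ε x - ∑ s, ∏ i, u s i (x i)|) (torusCube d) :=
    (((continuous_fejerSum ε).continuousOn.integrableOn_compact
      (isCompact_torusCube d)).sub hu).abs
  have error_ge (y : Fin d → ℝ) (hy : y ∈ gridBox n δ) :
      (Fintype.card (GridIndex n) : ℝ) / 1280 ≤ ∑ κ : GridIndex n,
        |fejerSum ε (gridPoint κ + y) - ∑ s, ∏ i, u s i ((gridPoint κ + y) i)| := by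
    refine card_div_le_sum_abs_sub (ε := ε) (fun κ => ?_) ?_
    · refine (abs_fejerSum_gridPoint_add_sub_le ε κ (η := 1 / 8) (by norm_num) fun a =>
        (abs_sum_freq_mul_le hy a).trans d_mul_δ_le).trans (by norm_num)
    · simpa only [eval_tensorPolynomial] using hε fun v =>
        u v.1 v.2.1 (-Real.pi + 2 * Real.pi * (v.2.2 : ℕ) / (n v.2.1 + 1 : ℕ) + y v.2.1)
  calc δ ^ d / 1280 = Fintype.card (GridIndex n) / 1280 * volume.real (gridBox n δ) := by
        rw [volume_real_gridBox δ_pos.le]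
        have : (Fintype.card (GridIndex n) : ℝ) ≠ 0 := by exact_mod_cast Fintype.card_ne_zero
        field_simp
    _ ≤ ∫ x in torusCube d, |fejerSum ε x - ∑ s, ∏ i, u s i (x i)| :=
        mul_measureReal_le_setIntegral_of_le_sum_translates measurableSet_Icc
          isCompact_Icc.measure_ne_top (pairwise_disjoint_translates_gridBox δ_lt)
          (image_gridBox_subset_torusCube δ_lt.le) (fun _ => abs_nonneg _) error_int error_ge

end LowerBound

section Theta

variable {d m : ℕ}

lemma le_theta1 {μ : Measure (Fin d → ℝ)} [IsFiniteMeasure μ] {f : (Fin d → ℝ) → ℝ} {c : ℝ}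
    (hc : ∀ u : Fin m → Fin d → ℝ → ℝ, Integrable (fun x => ∑ s, ∏ i, u s i (x i)) μ →
      c ≤ ∫ x, |f x - ∑ s, ∏ i, u s i (x i)| ∂μ) :
    c ≤ theta1 d m μ f :=
  le_csInf ⟨_, fun _ _ _ => 0, fun _ _ => measurable_const,
    integrable_const (∑ _ : Fin m, ∏ _ : Fin d, 0), rfl⟩
    fun _ ⟨u, _, hu, hr⟩ => hr ▸ hc u hu

lemma theta1_le_of_abs_le {μ : Measure (Fin d → ℝ)} [IsFiniteMeasure μ] {f : (Fin d → ℝ) → ℝ}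
    {C : ℝ} (hf : ∀ᵐ x ∂μ, |f x| ≤ C) : theta1 d m μ f ≤ (C + m) * μ.real Set.univ := by
  let u : Fin m → Fin d → ℝ → ℝ := fun _ _ _ => 0
  have abs_sum_le (x : Fin d → ℝ) : |∑ s, ∏ i, u s i (x i)| ≤ m := by
    simpa [u, abs_mul] using mul_le_of_le_one_right m.cast_nonneg
      (pow_le_one₀ (n := d) le_rfl zero_le_one)
  calc theta1 d m μ f ≤ ∫ x, |f x - ∑ s, ∏ i, u s i (x i)| ∂μ :=
        csInf_le ⟨0, fun _ ⟨_, _, _, hr⟩ => hr ▸ integral_nonneg fun _ => abs_nonneg _⟩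
          ⟨u, fun _ _ => measurable_const, integrable_const (∑ _ : Fin m, ∏ _ : Fin d, 0), rfl⟩
    _ ≤ ‖∫ x, |f x - ∑ s, ∏ i, u s i (x i)| ∂μ‖ := le_abs_self _
    _ ≤ (C + m) * μ.real Set.univ := by
        refine norm_integral_le_of_norm_le_const (hf.mono fun x hx => ?_)
        rw [Real.norm_eq_abs, abs_abs]
        exact (abs_sub _ _).trans (add_le_add hx (abs_sum_le x))

lemma theta1_le_iSup_trigClass {n : Fin d → ℕ} {t : (Fin d → ℝ) → ℝ} (ht : t ∈ TrigClass d n) :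
    theta1 d m (volume.restrict (torusCube d)) t ≤
      ⨆ t ∈ TrigClass d n, theta1 d m (volume.restrict (torusCube d)) t := by
  have theta1_le (t) (ht : t ∈ TrigClass d n) :=
    theta1_le_of_abs_le (m := m) (μ := volume.restrict (torusCube d)) <|
      ae_restrict_of_forall_mem (MeasurableSet.univ_pi fun _ => measurableSet_Icc)
        fun x hx => ht.2 x fun j => hx j trivial
  refine le_ciSup_of_le ⟨(1 + m) * (volume.restrict (torusCube d)).real Set.univ, ?_⟩ t
    (ciSup_pos (f := fun _ => theta1 d m (volume.restrict (torusCube d)) t) ht).ge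
  rintro _ ⟨t', rfl⟩
  exact Real.iSup_le (theta1_le t') (by positivity)

lemma mul_sum_le_prod_of_le_mul_prod_div_sup {n : Fin d → ℕ}
    (hm : (m : ℝ) ≤ 1 / (8 * (d + 1) * (d + 4)) * (∏ j, n j : ℕ) / (univ.sup n : ℕ)) :
    4 * (m * ∑ j, (n j + 1)) * (d + 4) ≤ ∏ j, (n j + 1) := by
  rcases Nat.eq_zero_or_pos (univ.sup n) with sup_zero | sup_pos
  · have : m = 0 := by
      rw [sup_zero, Nat.cast_zero, div_zero] at hm
      exact_mod_cast hm.antisymm m.cast_nonneg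
    simp [this]
  have sum_le : ∑ j, (n j + 1) ≤ d * (2 * univ.sup n) := by
    calc ∑ j, (n j + 1) ≤ ∑ _j : Fin d, 2 * univ.sup n :=
          sum_le_sum fun j _ => by have := le_sup (f := n) (mem_univ j); omega
      _ = d * (2 * univ.sup n) := by simp
  have mul_sup_le : m * univ.sup n * (8 * (d + 1) * (d + 4)) ≤ ∏ j, n j := by
    rw [le_div_iff₀ (by exact_mod_cast sup_pos), one_div_mul_eq_div,
      le_div_iff₀ (by positivity)] at hm
    exact_mod_cast hm
  calc 4 * (m * ∑ j, (n j + 1)) * (d + 4)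
      ≤ 4 * (m * ((d + 1) * (2 * univ.sup n))) * (d + 4) := by
        gcongr
        exact sum_le.trans (Nat.mul_le_mul_right _ d.le_succ)
    _ = m * univ.sup n * (8 * (d + 1) * (d + 4)) := by ring
    _ ≤ ∏ j, n j := mul_sup_le
    _ ≤ ∏ j, (n j + 1) := prod_le_prod' fun j _ => (n j).le_succ

end Theta

end

/-- `Θ_m(T(n)_∞, L₁[-π,π]^d) ≥ c₂(d) > 0` whenever `m ≤ c₁(d) (n₁⋯n_d)/max_j n_j`. -/
theorem theta_trig_lower (d : ℕ) :
    ∃ c₁ : ℝ, 0 < c₁ ∧ ∃ c₂ : ℝ, 0 < c₂ ∧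
      ∀ n : Fin d → ℕ, ∀ m : ℕ,
        (m : ℝ) ≤ c₁ * (∏ j, n j : ℕ) / (Finset.univ.sup n : ℕ) →
        c₂ ≤ ⨆ t ∈ TrigClass d n,
          theta1 d m (volume.restrict (Set.univ.pi fun _ => Set.Icc (-Real.pi) Real.pi)) t := by
  refine ⟨1 / (8 * (d + 1) * (d + 4)), by positivity, (1 / (8 * (d + 1))) ^ d / 1280,
    by positivity, fun n m hm => ?_⟩
  obtain ⟨t, ht, ht_le⟩ :=
    exists_trigClass_forall_le_integral (mul_sum_le_prod_of_le_mul_prod_div_sup hm)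
  exact (le_theta1 ht_le).trans (theta1_le_iSup_trigClass ht)
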